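/- arXiv:2505.05009 — 11 statements merged into one kernel-verified Lean document; each statement's English description precedes it below -/
import Mathlib

section
/- Let G be a finite simple graph on vertex set V. Then G contains an independent set I with |I| ≥ ∑_{v ∈ V} 1/(1 + deg(v)). -/
/-- A finset of vertices is an independent set of the simple graph `G` if no two
distinct elements of it are adjacent. -/
def SimpleGraph.IsIndepFinset {V : Type*} (G : SimpleGraph V) (I : Finset V) : Prop :=
  ∀ x ∈ I, ∀ y ∈ I, x ≠ y → ¬ G.Adj x y

theorem caro_wei_aux {V : Type*} [DecidableEq V] (G : SimpleGraph V)
    [DecidableRel G.Adj] (n : ℕ) : ∀ S : Finset V, S.card = n →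
    ∃ I : Finset V, I ⊆ S ∧ G.IsIndepFinset I ∧
      (∑ v ∈ S, (1 : ℝ) / (1 + ((S.filter (G.Adj v)).card : ℝ))) ≤ I.card := by
  induction n using Nat.strong_induction_on with
  | _ n ih =>
  intro S hS
  rcases S.eq_empty_or_nonempty with rfl | hne
  · exact ⟨∅, by simp, by simp [SimpleGraph.IsIndepFinset], by simp⟩
  obtain ⟨v, hv, hmin⟩ := S.exists_min_image (fun v => (S.filter (G.Adj v)).card) hne
  set C : Finset V := insert v (S.filter (G.Adj v)) with hC
  have hCS : C ⊆ S := by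
    intro x hx
    rcases Finset.mem_insert.1 hx with rfl | hx
    · exact hv
    · exact (Finset.mem_filter.1 hx).1
  have hvC : v ∈ C := Finset.mem_insert_self _ _
  have hlt : (S \ C).card < n := by
    rw [← hS]
    exact Finset.card_lt_card
      ⟨Finset.sdiff_subset, fun h => (Finset.mem_sdiff.1 (h hv)).2 hvC⟩
  obtain ⟨I, hI, hind, hle⟩ := ih _ hlt (S \ C) rfl
  have hvI : v ∉ I := fun h => (Finset.mem_sdiff.1 (hI h)).2 hvC
  have hnadj : ∀ x ∈ I, ¬ G.Adj v x := fun x hx hadj =>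
    (Finset.mem_sdiff.1 (hI hx)).2
      (Finset.mem_insert_of_mem (Finset.mem_filter.2 ⟨(Finset.mem_sdiff.1 (hI hx)).1, hadj⟩))
  refine ⟨insert v I, Finset.insert_subset hv (hI.trans Finset.sdiff_subset), ?_, ?_⟩
  · intro x hx y hy hxy
    rcases Finset.mem_insert.1 hx with rfl | hxI
    · rcases Finset.mem_insert.1 hy with rfl | hy
      · exact absurd rfl hxy
      · exact hnadj y hy
    · rcases Finset.mem_insert.1 hy with rfl | hy
      · exact fun h => hnadj x hxI h.symm
      · exact hind x hxI y hy hxy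
  · rw [← Finset.sum_sdiff hCS, Finset.card_insert_of_notMem hvI]
    push_cast
    refine add_le_add (le_trans (Finset.sum_le_sum ?_) hle) ?_
    · intro x _
      have : ((S \ C).filter (G.Adj x)).card ≤ (S.filter (G.Adj x)).card :=
        Finset.card_le_card (Finset.filter_subset_filter _ Finset.sdiff_subset)
      gcongr
    · have hcard : C.card = (S.filter (G.Adj v)).card + 1 :=
        Finset.card_insert_of_notMem (by simp)
      have hb : ∀ x ∈ C, (1 : ℝ) / (1 + ((S.filter (G.Adj x)).card : ℝ)) ≤
          1 / (1 + ((S.filter (G.Adj v)).card : ℝ)) := by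
        intro x hx
        have := hmin x (hCS hx)
        gcongr
      refine (Finset.sum_le_card_nsmul _ _ _ hb).trans (le_of_eq ?_)
      rw [hcard, nsmul_eq_mul]
      push_cast
      field_simp
      ring

/-- **Turán-type bound (Caro–Wei)**: every finite simple graph `G` contains an
independent set `I` with `|I| ≥ ∑_{v} 1/(1 + deg v)`. -/
theorem caro_wei {V : Type*} [Fintype V] [DecidableEq V] (G : SimpleGraph V)
    [DecidableRel G.Adj] :
    ∃ I : Finset V, G.IsIndepFinset I ∧
      (∑ v : V, (1 : ℝ) / (1 + G.degree v)) ≤ I.card := by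
  obtain ⟨I, -, hI, h⟩ := caro_wei_aux G _ Finset.univ rfl
  refine ⟨I, hI, le_trans (le_of_eq (Finset.sum_congr rfl fun v _ => ?_)) h⟩
  rw [← G.card_neighborFinset_eq_degree, G.neighborFinset_eq_filter]
end

section
/- Let G be a finite simple graph with n vertices and m edges, where m ≥ n. Let N and ℓ be positive integers with N ≤ n²/(8m) and ℓ ≤ n/(2N). Then G contains ℓ pairwise disjoint independent sets, each of cardinality N. -/
/-- Turán / Caro–Wei inside a vertex subset. -/
lemma turan_aux {V : Type*} [Fintype V] [DecidableEq V] (G : SimpleGraph V)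
    [DecidableRel G.Adj] (U : Finset V) :
    ∃ I ⊆ U, G.IsIndepFinset I ∧
      U.card ^ 2 ≤ I.card * ∑ v ∈ U, ((U.filter (G.Adj v)).card + 1) := by
  induction U using Finset.strongInduction with
  | H U ih =>
    rcases U.eq_empty_or_nonempty with rfl | hU
    · exact ⟨∅, by simp, by simp [SimpleGraph.IsIndepFinset], by simp⟩
    obtain ⟨v, hv, hmin⟩ := U.exists_min_image (fun v => (U.filter (G.Adj v)).card) hU
    set A := insert v (U.filter (G.Adj v)) with hA
    have hAU : A ⊆ U := by
      intro x hx
      simp only [hA, Finset.mem_insert, Finset.mem_filter] at hx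
      rcases hx with rfl | hx
      · exact hv
      · exact hx.1
    have hAc : A.card = (U.filter (G.Adj v)).card + 1 :=
      Finset.card_insert_of_notMem (by simp)
    have hvA : v ∈ A := by simp [hA]
    obtain ⟨I, hIU, hI, hc⟩ := ih (U \ A)
      (Finset.sdiff_ssubset hAU ⟨v, hvA⟩)
    have hvI : v ∉ I := fun h => (Finset.mem_sdiff.1 (hIU h)).2 hvA
    have hnv : ∀ x ∈ I, ¬ G.Adj v x := by
      intro x hx hadj
      have h := Finset.mem_sdiff.1 (hIU hx)
      exact h.2 (by simp [hA, h.1, hadj])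
    refine ⟨insert v I, ?_, ?_, ?_⟩
    · intro x hx
      rcases Finset.mem_insert.1 hx with rfl | hx
      · exact hv
      · exact (Finset.mem_sdiff.1 (hIU hx)).1
    · intro x hx y hy hxy
      rcases Finset.mem_insert.1 hx with rfl | hx1 <;>
        rcases Finset.mem_insert.1 hy with rfl | hy1
      · exact absurd rfl hxy
      · exact hnv y hy1
      · exact fun h => hnv x hx1 h.symm
      · exact hI x hx1 y hy1 hxy
    · rw [Finset.card_insert_of_notMem hvI]
      have h1 : (U \ A).card + A.card = U.card := Finset.card_sdiff_add_card_eq_card hAU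
      have h2 : ∑ x ∈ U \ A, (((U \ A).filter (G.Adj x)).card + 1) + A.card ^ 2
          ≤ ∑ x ∈ U, ((U.filter (G.Adj x)).card + 1) := by
        rw [← Finset.sum_sdiff hAU]
        refine add_le_add (Finset.sum_le_sum fun x _ => ?_) ?_
        · gcongr
          exact Finset.sdiff_subset
        · rw [sq, ← smul_eq_mul]
          refine Finset.card_nsmul_le_sum _ _ _ fun x hx => ?_
          rw [hAc]
          exact Nat.succ_le_succ (hmin x (hAU hx))
      rw [← h1]
      generalize ∑ x ∈ U \ A, (((U \ A).filter (G.Adj x)).card + 1) = S' at *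
      generalize ∑ x ∈ U, ((U.filter (G.Adj x)).card + 1) = S at *
      generalize (U \ A).card = w at *
      generalize A.card = a at *
      generalize I.card = k at *
      have h3 : 2 * w * a ≤ k * a ^ 2 + S' := by
        refine (Nat.pow_le_pow_iff_left two_ne_zero).1 ?_
        zify at hc ⊢
        nlinarith [mul_le_mul_of_nonneg_right hc (sq_nonneg (a : ℤ)),
          sq_nonneg ((k : ℤ) * a ^ 2 - S')]
      calc (w + a) ^ 2 = w ^ 2 + 2 * w * a + a ^ 2 := by ring
        _ ≤ k * S' + (k * a ^ 2 + S') + a ^ 2 := by gcongr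
        _ = (k + 1) * (S' + a ^ 2) := by ring
        _ ≤ (k + 1) * S := by gcongr

/-- **Repeated Turán's theorem**: a finite simple graph with `n` vertices and `m ≥ n`
edges contains `ℓ` pairwise disjoint independent sets, each of size `N`, whenever
`N ≤ n²/(8m)` and `ℓ ≤ n/(2N)`. -/
theorem repeated_turan {V : Type*} [Fintype V] [DecidableEq V] (G : SimpleGraph V)
    [DecidableRel G.Adj] (n m N ℓ : ℕ)
    (hn : n = Fintype.card V) (hm : m = G.edgeFinset.card) (hmn : n ≤ m)
    (hN : 0 < N) (hℓ : 0 < ℓ)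
    (hNle : (N : ℝ) ≤ (n : ℝ)^2 / (8 * m))
    (hℓle : (ℓ : ℝ) ≤ (n : ℝ) / (2 * N)) :
    ∃ S : Fin ℓ → Finset V,
      (∀ i j, i ≠ j → Disjoint (S i) (S j)) ∧
      (∀ i, G.IsIndepFinset (S i)) ∧
      (∀ i, (S i).card = N) := by
  have hm0 : 0 < m := by
    rcases Nat.eq_zero_or_pos m with h | h
    · subst h
      simp at hNle
      omega
    · exact h
  have e1 : N * (8 * m) ≤ n ^ 2 := by
    rw [le_div_iff₀ (by positivity)] at hNle
    exact_mod_cast hNle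
  have e2 : ℓ * (2 * N) ≤ n := by
    rw [le_div_iff₀ (by positivity)] at hℓle
    exact_mod_cast hℓle
  have key : ∀ k ≤ ℓ, ∃ S : ℕ → Finset V,
      (∀ i < k, ∀ j < k, i ≠ j → Disjoint (S i) (S j)) ∧
      (∀ i < k, G.IsIndepFinset (S i)) ∧ (∀ i < k, (S i).card = N) := by
    intro k
    induction k with
    | zero => exact fun _ => ⟨fun _ => ∅, by simp, by simp, by simp⟩
    | succ k ih =>
      intro hk
      obtain ⟨S, hd, hi, hc⟩ := ih (by omega)
      set B := (Finset.range k).biUnion S with hB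
      have hBc : B.card ≤ k * N := by
        simpa using Finset.card_biUnion_le_card_mul (Finset.range k) S N
          (fun i h => (hc i (Finset.mem_range.1 h)).le)
      obtain ⟨I, hIU, hI, hIc⟩ := turan_aux G Bᶜ
      have hu : Bᶜ.card + B.card = n := by
        rw [hn, Finset.card_compl_add_card]
      have hD : ∑ v ∈ Bᶜ, ((Bᶜ.filter (G.Adj v)).card + 1) ≤ 2 * m + Bᶜ.card := by
        rw [Finset.sum_add_distrib, hm, ← G.sum_degrees_eq_twice_card_edges]
        gcongr
        · refine (Finset.sum_le_sum fun v _ => ?_).trans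
            (Finset.sum_le_sum_of_subset (Finset.subset_univ _))
          rw [← G.card_neighborFinset_eq_degree]
          exact Finset.card_le_card fun x hx => by simpa using (Finset.mem_filter.1 hx).2
        · simp
      have hkN : (k + 1) * (2 * N) ≤ n := (Nat.mul_le_mul_right _ hk).trans e2
      have hNI : N ≤ I.card := by
        generalize Bᶜ.card = u at *
        have h1 : n + 2 * N ≤ 2 * u := by nlinarith
        have h2 : N * (2 * m + u) ≤ u ^ 2 := by
          zify at *
          nlinarith [mul_le_mul h1 (show (n : ℤ) ≤ 2 * (u - N) by linarith)
            (by positivity) (by positivity)]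
        have h3 : N * (2 * m + u) ≤ I.card * (2 * m + u) :=
          h2.trans (hIc.trans (Nat.mul_le_mul_left _ hD))
        exact Nat.le_of_mul_le_mul_right h3 (by omega)
      obtain ⟨J, hJI, hJ⟩ := Finset.exists_subset_card_eq hNI
      have hJd : ∀ i < k, Disjoint (S i) J := by
        intro i hik
        rw [Finset.disjoint_left]
        intro x hx hxJ
        have := hIU (hJI hxJ)
        rw [Finset.mem_compl] at this
        exact this (Finset.mem_biUnion.2 ⟨i, Finset.mem_range.2 hik, hx⟩)
      refine ⟨fun i => if i < k then S i else J, ?_, ?_, ?_⟩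
      · intro i hi' j hj' hij
        by_cases h1 : i < k <;> by_cases h2 : j < k <;> simp only [h1, h2, if_true, if_false]
        · exact hd i h1 j h2 hij
        · exact hJd i h1
        · exact (hJd j h2).symm
        · omega
      · intro i _
        by_cases h1 : i < k <;> simp only [h1, if_true, if_false]
        · exact hi i h1
        · exact fun x hx y hy => hI x (hJI hx) y (hJI hy)
      · intro i _
        by_cases h1 : i < k <;> simp only [h1, if_true, if_false]
        · exact hc i h1
        · exact hJ
  obtain ⟨S, hd, hi, hc⟩ := key ℓ le_rfl
  exact ⟨fun i => S i, fun i j hij => hd i i.2 j j.2 (fun h => hij (Fin.ext h)),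
    fun i => hi i i.2, fun i => hc i i.2⟩
end

section
/- Let U be a finite set and let Q and Q' be sets of unordered pairs of distinct elements of U. Let ℓ ≥ 1 and let S₁, …, S_ℓ be pairwise disjoint subsets of U, each independent with respect to Q, let S = S₁ ∪ ⋯ ∪ S_ℓ, and let P be a partition of U such that each Sᵢ is a block of P. Let N and ℓ' be positive integers with |Q ∪ Q'| ≥ |S|, N ≤ |S|²/(8·|Q ∪ Q'|), and ℓ' ≤ |S|/(2N). Then there exist ℓ' pairwise disjoint subsets S'₁, …, S'_{ℓ'} of S, each of cardinality N and each independent with respect to Q ∪ Q', and a partition P' of U with at most |P| + ℓ' blocks, such that: (1) each S'_j is a block of P'; and (2) for every pair {x, y} ∈ Q, x and y are in the same set of P if and only if x and y are in the same set of P'. -/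
section

variable {U : Type*} [Fintype U] [DecidableEq U]

/-- `P` is a partition of the finite type `U`: a finite collection of nonempty,
pairwise disjoint finsets covering `U`. -/
def IsPartitionOf (P : Finset (Finset U)) : Prop :=
  (∀ b ∈ P, b.Nonempty) ∧ (∀ b ∈ P, ∀ b' ∈ P, b ≠ b' → Disjoint b b') ∧
    ∀ x : U, ∃ b ∈ P, x ∈ b

/-- `x` and `y` lie in the same set of the partition `P`. -/
def SameSet (P : Finset (Finset U)) (x y : U) : Prop := ∃ b ∈ P, x ∈ b ∧ y ∈ b

/-- `I` is independent with respect to the set of unordered pairs `Q`: no unordered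
pair of distinct elements of `I` belongs to `Q`. -/
def IndepWrt (Q : Finset (Sym2 U)) (I : Finset U) : Prop :=
  ∀ x ∈ I, ∀ y ∈ I, x ≠ y → s(x, y) ∉ Q

open Classical in
theorem turan_indep_aux {V : Type*} [Fintype V] (G : SimpleGraph V) (r : ℕ)
    (h : r * (Fintype.card V + 2 * G.edgeFinset.card) < Fintype.card V ^ 2) :
    ∃ I : Finset V, G.IsNIndepSet (r + 1) I := by
  by_contra hcon
  have hcf : Gᶜ.CliqueFree (r + 1) := by
    intro t ht
    exact hcon ⟨t, by simpa using ht⟩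
  have h1 := hcf.card_edgeFinset_le
  simp only at h1
  rw [← SimpleGraph.card_edgeFinset_turanGraph] at h1
  have h2 := SimpleGraph.mul_card_edgeFinset_turanGraph_le (n := Fintype.card V) (r := r)
  have h3 : (Fintype.card V).choose 2 ≤ G.edgeFinset.card + Gᶜ.edgeFinset.card := by
    rw [← SimpleGraph.card_edgeFinset_top_eq_card_choose_two]
    refine le_trans (Finset.card_le_card ?_) (Finset.card_union_le _ _)
    intro e he
    induction e with
    | h x y =>
      simp only [Finset.mem_union, SimpleGraph.mem_edgeFinset, SimpleGraph.mem_edgeSet,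
        SimpleGraph.compl_adj, SimpleGraph.top_adj] at he ⊢
      tauto
  set n := Fintype.card V
  have h4 : n * n ≤ 2 * n.choose 2 + n := by
    rw [Nat.choose_two_right]
    have : 2 * (n * (n - 1) / 2) = n * (n - 1) :=
      Nat.mul_div_cancel' (Nat.even_mul_pred_self n).two_dvd
    rw [this]
    cases n with
    | zero => simp
    | succ m => simp; nlinarith
  rcases r.eq_zero_or_pos with rfl | hr
  · have hn : 0 < n := by
      rcases n.eq_zero_or_pos with h0 | h0
      · simp [h0] at h
      · exact h0
    obtain ⟨v⟩ := Fintype.card_pos_iff.mp hn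
    exact hcon ⟨{v}, by simp [SimpleGraph.isNIndepSet_iff, SimpleGraph.isIndepSet_iff]⟩
  · obtain ⟨k, rfl⟩ : ∃ k, r = k + 1 := ⟨r - 1, by omega⟩
    simp only [Nat.add_sub_cancel] at h2
    have h5 : (k + 1) * (n * n) ≤ (k + 1) * (2 * (G.edgeFinset.card
        + (SimpleGraph.turanGraph n (k + 1)).edgeFinset.card) + n) :=
      Nat.mul_le_mul_left _ (by omega)
    nlinarith

theorem turan_indep (T : Finset (Sym2 U)) (R : Finset U) (r : ℕ)
    (h : r * (R.card + 2 * T.card) < R.card ^ 2) :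
    ∃ I ⊆ R, I.card = r + 1 ∧ IndepWrt T I := by
  classical
  let G : SimpleGraph {x // x ∈ R} :=
    { Adj := fun x y => x ≠ y ∧ s(x.1, y.1) ∈ T
      symm := ⟨fun x y hxy => ⟨hxy.1.symm, by rw [Sym2.eq_swap]; exact hxy.2⟩⟩
      loopless := ⟨fun x hx => hx.1 rfl⟩ }
  have hG : G.edgeFinset.card ≤ T.card := by
    refine Finset.card_le_card_of_injOn (Sym2.map Subtype.val) ?_
      (Sym2.map.injective Subtype.val_injective).injOn
    intro e he
    induction e with
    | h x y =>
      have he' : G.Adj x y := by simpa using he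
      exact he'.2
  obtain ⟨I, hI⟩ := turan_indep_aux G r (by
    rw [Fintype.card_coe]
    refine lt_of_le_of_lt (Nat.mul_le_mul_left _ ?_) h
    convert Nat.add_le_add_left (Nat.mul_le_mul_left 2 hG) R.card)
  refine ⟨I.map (Function.Embedding.subtype _), ?_, ?_, ?_⟩
  · intro x hx
    simp at hx
    exact hx.1
  · rw [Finset.card_map]; exact hI.card_eq
  · intro x hx y hy hxy hT
    simp only [Finset.mem_map, Function.Embedding.coe_subtype] at hx hy
    obtain ⟨a, ha, rfl⟩ := hx
    obtain ⟨b, hb, rfl⟩ := hy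
    have hab : a ≠ b := fun e => hxy (by rw [e])
    exact hI.isIndepSet ha hb hab ⟨hab, hT⟩

theorem carve_greedy (T : Finset (Sym2 U)) (A : Finset U) (r L : ℕ)
    (h1 : 8 * T.card * (r + 1) ≤ A.card ^ 2) (h2 : L * (2 * (r + 1)) ≤ A.card) :
    ∀ k ≤ L, ∃ f : ℕ → Finset U, (∀ j < k, f j ⊆ A ∧ (f j).card = r + 1 ∧ IndepWrt T (f j)) ∧
      ∀ i < k, ∀ j < k, i ≠ j → Disjoint (f i) (f j) := by
  intro k
  induction k with
  | zero => intro _; exact ⟨fun _ => ∅, by simp, by simp⟩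
  | succ k ih =>
    intro hk
    obtain ⟨f, hf, hd⟩ := ih (by omega)
    set W := (Finset.range k).biUnion f with hW
    have hWc : W.card ≤ k * (r + 1) := by
      have := Finset.card_biUnion_le_card_mul (Finset.range k) f (r + 1)
        (fun j hj => (hf j (Finset.mem_range.mp hj)).2.1.le)
      simpa using this
    have hR : A.card ≤ (A \ W).card + W.card := by
      have := Finset.le_card_sdiff W A
      omega
    have hbig : A.card + 2 * (r + 1) ≤ 2 * (A \ W).card := by nlinarith
    obtain ⟨I, hIs, hIc, hIi⟩ := turan_indep T (A \ W) r (by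
      set n := (A \ W).card
      obtain ⟨d, hd⟩ : ∃ d, n = r + 1 + d := ⟨n - (r + 1), by omega⟩
      have hd2 : A.card ≤ 2 * d := by omega
      have h3 : A.card ^ 2 ≤ (2 * d) ^ 2 := Nat.pow_le_pow_left hd2 2
      rw [hd]
      nlinarith)
    refine ⟨Function.update f k I, ?_, ?_⟩
    · intro j hj
      by_cases hjk : j = k
      · subst hjk
        simp only [Function.update_self]
        exact ⟨hIs.trans Finset.sdiff_subset, hIc, hIi⟩
      · rw [Function.update_of_ne hjk]
        exact hf j (by omega)
    · have key : ∀ j < k, Disjoint (f j) I := by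
        intro j hj
        rw [Finset.disjoint_left]
        intro x hx hxI
        have := (Finset.mem_sdiff.mp (hIs hxI)).2
        exact this (Finset.mem_biUnion.mpr ⟨j, Finset.mem_range.mpr hj, hx⟩)
      intro i hi j hj hij
      by_cases hik : i = k
      · subst hik
        rw [Function.update_self, Function.update_of_ne (Ne.symm hij)]
        exact (key j (by omega)).symm
      · rw [Function.update_of_ne hik]
        by_cases hjk : j = k
        · subst hjk
          rw [Function.update_self]
          exact key i (by omega)
        · rw [Function.update_of_ne hjk]
          exact hd i (by omega) j (by omega) hij

/-- **The Carving Lemma.** -/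
theorem carving_lemma (Q Q' : Finset (Sym2 U))
    (hQ : ∀ e ∈ Q, ¬ e.IsDiag) (hQ' : ∀ e ∈ Q', ¬ e.IsDiag)
    (ℓ : ℕ) (hℓ : 1 ≤ ℓ) (S : Fin ℓ → Finset U)
    (hSdisj : ∀ i j, i ≠ j → Disjoint (S i) (S j))
    (hSindep : ∀ i, IndepWrt Q (S i))
    (Sun : Finset U) (hSun : Sun = (Finset.univ : Finset (Fin ℓ)).biUnion S)
    (P : Finset (Finset U)) (hP : IsPartitionOf P) (hSP : ∀ i, S i ∈ P)
    (N ℓ' : ℕ) (hN : 0 < N) (hℓ' : 0 < ℓ')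
    (hQbig : Sun.card ≤ (Q ∪ Q').card)
    (hNle : (N : ℝ) ≤ (Sun.card : ℝ) ^ 2 / (8 * (Q ∪ Q').card))
    (hℓ'le : (ℓ' : ℝ) ≤ (Sun.card : ℝ) / (2 * N)) :
    ∃ (S' : Fin ℓ' → Finset U) (P' : Finset (Finset U)),
      (∀ j, S' j ⊆ Sun) ∧
      (∀ j j', j ≠ j' → Disjoint (S' j) (S' j')) ∧
      (∀ j, (S' j).card = N) ∧
      (∀ j, IndepWrt (Q ∪ Q') (S' j)) ∧
      IsPartitionOf P' ∧
      P'.card ≤ P.card + ℓ' ∧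
      (∀ j, S' j ∈ P') ∧
      (∀ x y : U, s(x, y) ∈ Q → (SameSet P x y ↔ SameSet P' x y)) := by
  classical
  obtain ⟨r, rfl⟩ : ∃ r, N = r + 1 := ⟨N - 1, by omega⟩
  have hspos : 0 < Sun.card := by
    rcases Nat.eq_zero_or_pos Sun.card with h0 | h0
    · exfalso
      rw [h0] at hNle
      simp at hNle
      have : (0 : ℝ) ≤ r := Nat.cast_nonneg r
      linarith
    · exact h0
  have hqpos : 0 < (Q ∪ Q').card := by omega
  have h1 : 8 * (Q ∪ Q').card * (r + 1) ≤ Sun.card ^ 2 := by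
    rw [le_div_iff₀ (by positivity)] at hNle
    have : ((8 * (Q ∪ Q').card * (r + 1) : ℕ) : ℝ) ≤ ((Sun.card ^ 2 : ℕ) : ℝ) := by
      push_cast at hNle ⊢
      linarith
    exact_mod_cast this
  have h2 : ℓ' * (2 * (r + 1)) ≤ Sun.card := by
    rw [le_div_iff₀ (by positivity)] at hℓ'le
    exact_mod_cast hℓ'le
  obtain ⟨f, hf, hd⟩ := carve_greedy (Q ∪ Q') Sun r ℓ' h1 h2 ℓ' le_rfl
  obtain ⟨hPne, hPd, hPc⟩ := hP
  set S' : Fin ℓ' → Finset U := fun j => f j with hS'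
  have hS'd : ∀ j j', j ≠ j' → Disjoint (S' j) (S' j') := fun j j' h =>
    hd j j.2 j' j'.2 (fun e => h (Fin.ext e))
  set W := (Finset.univ : Finset (Fin ℓ')).biUnion S' with hW
  have hWS : W ⊆ Sun := Finset.biUnion_subset.mpr fun j _ => (hf j j.2).1
  have hS'W : ∀ j, S' j ⊆ W := fun j => Finset.subset_biUnion_of_mem S' (Finset.mem_univ j)
  have hS'ne : ∀ j, (S' j).Nonempty := fun j => Finset.card_pos.mp (by
    rw [(hf j j.2).2.1]; omega)
  have hmem : ∀ b, b ∈ ((P.image (· \ W)).erase ∅) ∪ Finset.univ.image S' ↔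
      (b.Nonempty ∧ ∃ c ∈ P, c \ W = b) ∨ ∃ j, S' j = b := by
    intro b
    simp [Finset.nonempty_iff_ne_empty]
  refine ⟨S', ((P.image (· \ W)).erase ∅) ∪ Finset.univ.image S', fun j => (hf j j.2).1, hS'd,
    fun j => (hf j j.2).2.1, fun j => (hf j j.2).2.2, ⟨?_, ?_, ?_⟩, ?_, ?_, ?_⟩
  · intro b hb
    rcases (hmem b).mp hb with ⟨h, _⟩ | ⟨j, rfl⟩
    · exact h
    · exact hS'ne j
  · intro b hb b' hb' hne
    rcases (hmem b).mp hb with ⟨h, c, hc, rfl⟩ | ⟨j, rfl⟩ <;>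
      rcases (hmem b').mp hb' with ⟨h', c', hc', rfl⟩ | ⟨j', rfl⟩
    · exact (hPd c hc c' hc' (fun e => hne (by rw [e]))).mono
        Finset.sdiff_subset Finset.sdiff_subset
    · exact Finset.sdiff_disjoint.mono_right (hS'W j')
    · exact (Finset.sdiff_disjoint.mono_right (hS'W j)).symm
    · exact hS'd j j' (fun e => hne (by rw [e]))
  · intro x
    by_cases hx : x ∈ W
    · obtain ⟨j, _, hj⟩ := Finset.mem_biUnion.mp hx
      exact ⟨S' j, (hmem _).mpr (Or.inr ⟨j, rfl⟩), hj⟩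
    · obtain ⟨b, hb, hxb⟩ := hPc x
      have hxx : x ∈ b \ W := Finset.mem_sdiff.mpr ⟨hxb, hx⟩
      exact ⟨b \ W, (hmem _).mpr (Or.inl ⟨⟨x, hxx⟩, b, hb, rfl⟩), hxx⟩
  · refine (Finset.card_union_le _ _).trans (Nat.add_le_add ?_ ?_)
    · exact (Finset.card_le_card (Finset.erase_subset _ _)).trans Finset.card_image_le
    · exact Finset.card_image_le.trans (by simp)
  · intro j
    exact (hmem _).mpr (Or.inr ⟨j, rfl⟩)
  · intro x y hxy
    have hne : x ≠ y := fun e => hQ _ hxy (by simp [e])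
    constructor
    · rintro ⟨b, hb, hxb, hyb⟩
      have hbW : ∀ z ∈ b, z ∉ W := by
        intro z hz hzW
        have hzS := hWS hzW
        rw [hSun] at hzS
        obtain ⟨i, _, hi⟩ := Finset.mem_biUnion.mp hzS
        have : b = S i := by
          by_contra hbi
          exact Finset.disjoint_left.mp (hPd b hb (S i) (hSP i) hbi) hz hi
        subst this
        exact hSindep i x hxb y hyb hne hxy
      have hxx : x ∈ b \ W := Finset.mem_sdiff.mpr ⟨hxb, hbW x hxb⟩
      exact ⟨b \ W, (hmem _).mpr (Or.inl ⟨⟨x, hxx⟩, b, hb, rfl⟩), hxx,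
        Finset.mem_sdiff.mpr ⟨hyb, hbW y hyb⟩⟩
    · rintro ⟨b, hb, hxb, hyb⟩
      rcases (hmem b).mp hb with ⟨_, c, hc, rfl⟩ | ⟨j, rfl⟩
      · exact ⟨c, hc, (Finset.mem_sdiff.mp hxb).1, (Finset.mem_sdiff.mp hyb).1⟩
      · exact absurd (Finset.mem_union_left _ hxy) ((hf j j.2).2.2 x hxb y hyb hne)

end
end

section
/- Let U be a finite set with |U| = n ≥ 2 and let Q be a set of unordered pairs of distinct elements of U. Suppose that Q distinguishes every two distinct partitions of U into at most 3 blocks, i.e., for any two distinct partitions P₁, P₂ of U each with at most 3 blocks, there is a pair {u, v} ∈ Q such that u and v are in the same set of exactly one of P₁ and P₂. Then Q contains every unordered pair of distinct elements of U; in particular |Q| = n(n−1)/2. -/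
section

variable {U : Type*} [Fintype U] [DecidableEq U]

def colorParts (f : U → Fin 3) : Finset (Finset U) :=
  Finset.univ.image (fun u => Finset.univ.filter (fun w => f w = f u))

lemma colorParts_isPartition (f : U → Fin 3) : IsPartitionOf (colorParts f) := by
  refine ⟨?_, ?_, ?_⟩
  · intro b hb
    obtain ⟨u, -, rfl⟩ := Finset.mem_image.1 hb
    exact ⟨u, by simp⟩
  · intro b hb b' hb' hne
    obtain ⟨u, -, rfl⟩ := Finset.mem_image.1 hb
    obtain ⟨v, -, rfl⟩ := Finset.mem_image.1 hb'
    rw [Finset.disjoint_left]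
    intro w hw hw'
    simp only [Finset.mem_filter, Finset.mem_univ, true_and] at hw hw'
    apply hne
    rw [← hw, ← hw']
  · intro x
    exact ⟨_, Finset.mem_image_of_mem _ (Finset.mem_univ x), by simp⟩

lemma colorParts_card (f : U → Fin 3) : (colorParts f).card ≤ 3 := by
  have h : colorParts f ⊆
      (Finset.univ : Finset (Fin 3)).image (fun c => Finset.univ.filter (fun w => f w = c)) := by
    intro b hb
    obtain ⟨u, -, rfl⟩ := Finset.mem_image.1 hb
    exact Finset.mem_image.2 ⟨f u, Finset.mem_univ _, rfl⟩
  exact (Finset.card_le_card h).trans (Finset.card_image_le.trans (by simp))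

lemma sameSet_colorParts (f : U → Fin 3) (u v : U) :
    SameSet (colorParts f) u v ↔ f u = f v := by
  constructor
  · rintro ⟨b, hb, hu, hv⟩
    obtain ⟨w, -, rfl⟩ := Finset.mem_image.1 hb
    simp only [Finset.mem_filter, Finset.mem_univ, true_and] at hu hv
    rw [hu, hv]
  · intro h
    exact ⟨_, Finset.mem_image_of_mem _ (Finset.mem_univ u), by simp, by simp [h]⟩

/-- If a set of unordered pairs `Q` distinguishes every two distinct partitions of `U`
into at most `3` blocks, then `Q` contains every unordered pair of distinct elements;
in particular `|Q| = n(n-1)/2`. -/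
theorem nonadaptive_pair_lower_bound (n : ℕ) (hn : n = Fintype.card U) (hn2 : 2 ≤ n)
    (Q : Finset (Sym2 U)) (hQ : ∀ e ∈ Q, ¬ e.IsDiag)
    (hdist : ∀ P₁ P₂ : Finset (Finset U), IsPartitionOf P₁ → IsPartitionOf P₂ →
      P₁.card ≤ 3 → P₂.card ≤ 3 → P₁ ≠ P₂ →
      ∃ u v : U, u ≠ v ∧ s(u, v) ∈ Q ∧ Xor' (SameSet P₁ u v) (SameSet P₂ u v)) :
    (∀ x y : U, x ≠ y → s(x, y) ∈ Q) ∧ Q.card = n * (n - 1) / 2 := by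
  have main : ∀ x y : U, x ≠ y → s(x, y) ∈ Q := by
    intro x y hxy
    let f : U → Fin 3 := fun w => if w = x then 0 else if w = y then 0 else 1
    let g : U → Fin 3 := fun w => if w = x then 0 else if w = y then 2 else 1
    have hne : colorParts f ≠ colorParts g := by
      intro h
      have h1 : SameSet (colorParts f) x y := by
        rw [sameSet_colorParts]; simp [f]
      rw [h, sameSet_colorParts] at h1
      simp [g, hxy.symm] at h1
    obtain ⟨u, v, huv, hm, hx⟩ := hdist _ _ (colorParts_isPartition f)
      (colorParts_isPartition g) (colorParts_card f) (colorParts_card g) hne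
    rw [sameSet_colorParts, sameSet_colorParts] at hx
    have key : (u = x ∧ v = y) ∨ (u = y ∧ v = x) := by
      simp only [f, g, Xor'] at hx
      by_cases h1 : u = x <;> by_cases h2 : u = y <;> by_cases h3 : v = x <;>
        by_cases h4 : v = y <;> simp_all
    rcases key with ⟨rfl, rfl⟩ | ⟨rfl, rfl⟩
    · exact hm
    · rwa [Sym2.eq_swap]
  refine ⟨main, ?_⟩
  have hQe : Q = (Finset.univ : Finset U).offDiag.image Sym2.mk.uncurry := by
    ext e
    induction e using Sym2.ind with
    | _ x y =>
      constructor
      · intro h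
        have := hQ _ h
        rw [Sym2.mk_isDiag_iff] at this
        exact Finset.mem_image.2 ⟨(x, y), by simpa using this, rfl⟩
      · intro h
        obtain ⟨⟨a, b⟩, hab, he⟩ := Finset.mem_image.1 h
        rw [← he]
        exact main a b (by simpa using hab)
  rw [hQe, Sym2.card_image_offDiag, Finset.card_univ, ← hn, Nat.choose_two_right]

end
end

section
/- Let U be a finite set, Q a set of unordered pairs of distinct elements of U, P a partition of U, and S ⊆ U such that for every pair {u, v} ∈ Q with {u, v} ∩ S ≠ ∅, the elements u and v are in different blocks of P. Let x, y ∈ S be distinct with {x, y} ∉ Q. Define P¹ to be the partition of U whose blocks are the nonempty sets X ∖ {x, y} for X ∈ P together with the block {x, y}, and define P² to be the partition whose blocks are the nonempty sets X ∖ {x, y} for X ∈ P together with the blocks {x} and {y}. Then P¹ and P² are partitions of U, each with at most |P| + 2 blocks, and for every pair {u, v} ∈ Q and each b ∈ {1, 2}: u and v are in the same set of P if and only if u and v are in the same set of P^b. -/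
section

variable {U : Type*} [Fintype U] [DecidableEq U]

/-- Splitting off an unqueried pair `{x,y} ⊆ S` of a partition `P` all of whose queried
pairs touching `S` are cut by `P`: both modifications `P¹` (making `{x,y}` a block) and
`P²` (making `{x}` and `{y}` singleton blocks) are partitions with at most `|P| + 2`
blocks that are consistent with `P` on every queried pair. -/
theorem split_pair_consistent (Q : Finset (Sym2 U)) (hQ : ∀ e ∈ Q, ¬ e.IsDiag)
    (P : Finset (Finset U)) (hP : IsPartitionOf P) (S : Finset U)
    (hcut : ∀ u v : U, s(u, v) ∈ Q → (u ∈ S ∨ v ∈ S) → ¬ SameSet P u v)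
    (x y : U) (hx : x ∈ S) (hy : y ∈ S) (hxy : x ≠ y) (hnq : s(x, y) ∉ Q)
    (P1 P2 : Finset (Finset U))
    (hP1 : P1 = insert ({x, y} : Finset U)
      ((P.image (fun X => X \ ({x, y} : Finset U))).filter (fun b => b.Nonempty)))
    (hP2 : P2 = insert ({x} : Finset U) (insert ({y} : Finset U)
      ((P.image (fun X => X \ ({x, y} : Finset U))).filter (fun b => b.Nonempty)))) :
    IsPartitionOf P1 ∧ IsPartitionOf P2 ∧
    P1.card ≤ P.card + 2 ∧ P2.card ≤ P.card + 2 ∧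
    (∀ u v : U, s(u, v) ∈ Q →
      ((SameSet P u v ↔ SameSet P1 u v) ∧ (SameSet P u v ↔ SameSet P2 u v))) := by
  have mem : ∀ b, b ∈ ((P.image (fun X => X \ ({x, y} : Finset U))).filter (fun b => b.Nonempty))
      ↔ (∃ X ∈ P, X \ ({x, y} : Finset U) = b) ∧ b.Nonempty := by
    intro b
    rw [Finset.mem_filter, Finset.mem_image]
  have hcard : ((P.image (fun X => X \ ({x, y} : Finset U))).filter
      (fun b => b.Nonempty)).card ≤ P.card :=
    (Finset.card_filter_le _ _).trans Finset.card_image_le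
  generalize ((P.image (fun X => X \ ({x, y} : Finset U))).filter (fun b => b.Nonempty)) = R at *
  obtain ⟨hne, hdis, hcov⟩ := hP
  have Rx : ∀ b ∈ R, x ∉ b := by
    intro b hb
    obtain ⟨⟨X, _, rfl⟩, _⟩ := (mem b).1 hb
    simp
  have Ry : ∀ b ∈ R, y ∉ b := by
    intro b hb
    obtain ⟨⟨X, _, rfl⟩, _⟩ := (mem b).1 hb
    simp
  have Rne : ∀ b ∈ R, b.Nonempty := fun b hb => ((mem b).1 hb).2
  have Rdis : ∀ b ∈ R, ∀ b' ∈ R, b ≠ b' → Disjoint b b' := by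
    intro b hb b' hb' h
    obtain ⟨⟨X, hX, rfl⟩, _⟩ := (mem b).1 hb
    obtain ⟨⟨Y, hY, rfl⟩, _⟩ := (mem b').1 hb'
    have hXY : X ≠ Y := fun e => h (by rw [e])
    exact (hdis X hX Y hY hXY).mono Finset.sdiff_subset Finset.sdiff_subset
  have Rcov : ∀ X ∈ P, ∀ z ∈ X, z ≠ x → z ≠ y → X \ ({x, y} : Finset U) ∈ R ∧
      z ∈ X \ ({x, y} : Finset U) := by
    intro X hX z hz h1 h2
    have hz' : z ∈ X \ ({x, y} : Finset U) := by simp [hz, h1, h2]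
    exact ⟨(mem _).2 ⟨⟨X, hX, rfl⟩, ⟨z, hz'⟩⟩, hz'⟩
  have hR : ∀ u v : U, s(u, v) ∈ Q → (SameSet P u v ↔ SameSet R u v) := by
    intro u v huv
    constructor
    · rintro ⟨X, hX, hu, hv⟩
      have hn : ¬ (u ∈ S ∨ v ∈ S) := fun h => hcut u v huv h ⟨X, hX, hu, hv⟩
      have h1 : u ≠ x := by rintro rfl; exact hn (Or.inl hx)
      have h2 : u ≠ y := by rintro rfl; exact hn (Or.inl hy)
      have h3 : v ≠ x := by rintro rfl; exact hn (Or.inr hx)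
      have h4 : v ≠ y := by rintro rfl; exact hn (Or.inr hy)
      exact ⟨_, (Rcov X hX u hu h1 h2).1, (Rcov X hX u hu h1 h2).2, (Rcov X hX v hv h3 h4).2⟩
    · rintro ⟨b, hb, hu, hv⟩
      obtain ⟨⟨X, hX, rfl⟩, _⟩ := (mem b).1 hb
      exact ⟨X, hX, (Finset.mem_sdiff.1 hu).1, (Finset.mem_sdiff.1 hv).1⟩
  have hpair : ∀ u v : U, s(u, v) ∈ Q → ¬ (u ∈ ({x, y} : Finset U) ∧ v ∈ ({x, y} : Finset U)) := by
    rintro u v huv ⟨hu, hv⟩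
    have hd : u ≠ v := fun e => hQ _ huv (by simpa using e)
    simp only [Finset.mem_insert, Finset.mem_singleton] at hu hv
    rcases hu with rfl | rfl <;> rcases hv with rfl | rfl
    · exact hd rfl
    · exact hnq huv
    · exact hnq (by rw [Sym2.eq_swap]; exact huv)
    · exact hd rfl
  subst hP1 hP2
  refine ⟨⟨?_, ?_, ?_⟩, ⟨?_, ?_, ?_⟩, ?_, ?_, ?_⟩
  · intro b hb
    rcases Finset.mem_insert.1 hb with rfl | hb
    · simp
    · exact Rne b hb
  · intro b hb b' hb' h
    rcases Finset.mem_insert.1 hb with rfl | hb <;> rcases Finset.mem_insert.1 hb' with rfl | hb'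
    · exact absurd rfl h
    · simp [Rx b' hb', Ry b' hb']
    · simp [Rx b hb, Ry b hb]
    · exact Rdis b hb b' hb' h
  · intro z
    by_cases h1 : z = x
    · exact ⟨{x, y}, by simp, by simp [h1]⟩
    by_cases h2 : z = y
    · exact ⟨{x, y}, by simp, by simp [h2]⟩
    obtain ⟨X, hX, hz⟩ := hcov z
    have := Rcov X hX z hz h1 h2
    exact ⟨_, Finset.mem_insert_of_mem this.1, this.2⟩
  · intro b hb
    simp only [Finset.mem_insert] at hb
    rcases hb with rfl | rfl | hb
    · simp
    · simp
    · exact Rne b hb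
  · intro b hb b' hb' h
    simp only [Finset.mem_insert] at hb hb'
    rcases hb with rfl | rfl | hb <;> rcases hb' with rfl | rfl | hb'
    · exact absurd rfl h
    · simp [hxy]
    · simp [Rx b' hb']
    · simp [hxy.symm]
    · exact absurd rfl h
    · simp [Ry b' hb']
    · simp [Rx b hb]
    · simp [Ry b hb]
    · exact Rdis b hb b' hb' h
  · intro z
    by_cases h1 : z = x
    · exact ⟨{x}, by simp, by simp [h1]⟩
    by_cases h2 : z = y
    · exact ⟨{y}, by simp, by simp [h2]⟩
    obtain ⟨X, hX, hz⟩ := hcov z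
    have := Rcov X hX z hz h1 h2
    exact ⟨_, Finset.mem_insert_of_mem (Finset.mem_insert_of_mem this.1), this.2⟩
  · have := Finset.card_insert_le ({x, y} : Finset U) R
    omega
  · have h1 := Finset.card_insert_le ({x} : Finset U) (insert {y} R)
    have h2 := Finset.card_insert_le ({y} : Finset U) R
    omega
  · intro u v huv
    rw [hR u v huv]
    refine ⟨⟨?_, ?_⟩, ⟨?_, ?_⟩⟩
    · rintro ⟨b, hb, h⟩
      exact ⟨b, Finset.mem_insert_of_mem hb, h⟩
    · rintro ⟨b, hb, h⟩
      rcases Finset.mem_insert.1 hb with rfl | hb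
      · exact absurd h (hpair u v huv)
      · exact ⟨b, hb, h⟩
    · rintro ⟨b, hb, h⟩
      exact ⟨b, Finset.mem_insert_of_mem (Finset.mem_insert_of_mem hb), h⟩
    · rintro ⟨b, hb, h⟩
      simp only [Finset.mem_insert] at hb
      rcases hb with rfl | rfl | hb
      · exact absurd ⟨by simp [Finset.mem_singleton.1 h.1], by simp [Finset.mem_singleton.1 h.2]⟩
          (hpair u v huv)
      · exact absurd ⟨by simp [Finset.mem_singleton.1 h.1], by simp [Finset.mem_singleton.1 h.2]⟩
          (hpair u v huv)
      · exact ⟨b, hb, h⟩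

end
end

section
/- Let k ≥ 2 be an integer, U a finite set, Q a set of unordered pairs of distinct elements of U, P a partition of U with at most k − 2 blocks, and S ⊆ U such that for every pair {u, v} ∈ Q with {u, v} ∩ S ≠ ∅, the elements u and v are in different blocks of P. Let Q' be a set of unordered pairs of distinct elements of U such that for any two distinct partitions of U each with at most k blocks, some pair in Q ∪ Q' has u, v in the same set of exactly one of the two partitions. Then every unordered pair of distinct elements of S that does not belong to Q belongs to Q'. -/
section

variable {U : Type*} [Fintype U] [DecidableEq U]

/-- If every queried pair of `Q` touching `S` is cut by the partition `P` (which has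
at most `k - 2` blocks), and `Q ∪ Q'` distinguishes every two distinct partitions
into at most `k` blocks, then `Q'` must contain every unordered pair of distinct
elements of `S` not already in `Q`. -/
theorem final_round_covers_unqueried_pairs (k : ℕ) (hk : 2 ≤ k)
    (Q Q' : Finset (Sym2 U))
    (hQ : ∀ e ∈ Q, ¬ e.IsDiag) (hQ' : ∀ e ∈ Q', ¬ e.IsDiag)
    (P : Finset (Finset U)) (hP : IsPartitionOf P) (hPk : P.card ≤ k - 2)
    (S : Finset U)
    (hcut : ∀ u v : U, s(u, v) ∈ Q → (u ∈ S ∨ v ∈ S) → ¬ SameSet P u v)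
    (hdist : ∀ P₁ P₂ : Finset (Finset U), IsPartitionOf P₁ → IsPartitionOf P₂ →
      P₁.card ≤ k → P₂.card ≤ k → P₁ ≠ P₂ →
      ∃ u v : U, u ≠ v ∧ s(u, v) ∈ Q ∪ Q' ∧ Xor' (SameSet P₁ u v) (SameSet P₂ u v)) :
    ∀ x ∈ S, ∀ y ∈ S, x ≠ y → s(x, y) ∉ Q → s(x, y) ∈ Q' := by
  intro x hx y hy hxy hnQ
  obtain ⟨_, hd, hc⟩ := hP
  let P0 : Finset (Finset U) := (P.image (fun b => b \ {x, y})).erase ∅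
  have hmem : ∀ b, b ∈ P0 ↔ b ≠ ∅ ∧ ∃ a ∈ P, a \ {x, y} = b := by
    intro b
    simp only [P0, Finset.mem_erase, Finset.mem_image]
  have hcard : P0.card ≤ k - 2 :=
    (Finset.card_le_card (Finset.erase_subset _ _)).trans
      (Finset.card_image_le.trans hPk)
  have hne : ∀ b ∈ P0, b.Nonempty := fun b hb =>
    Finset.nonempty_iff_ne_empty.mpr ((hmem b).1 hb).1
  have hx0 : ∀ b ∈ P0, x ∉ b := by
    intro b hb
    obtain ⟨_, a, _, rfl⟩ := (hmem b).1 hb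
    simp
  have hy0 : ∀ b ∈ P0, y ∉ b := by
    intro b hb
    obtain ⟨_, a, _, rfl⟩ := (hmem b).1 hb
    simp
  have hd0 : ∀ b ∈ P0, ∀ b' ∈ P0, b ≠ b' → Disjoint b b' := by
    intro b hb b' hb' h
    obtain ⟨_, a, ha, rfl⟩ := (hmem b).1 hb
    obtain ⟨_, a', ha', rfl⟩ := (hmem b').1 hb'
    have haa : a ≠ a' := by
      rintro rfl
      exact h rfl
    exact (hd a ha a' ha' haa).mono Finset.sdiff_subset Finset.sdiff_subset
  have hc0 : ∀ z, z ≠ x → z ≠ y → ∃ b ∈ P0, z ∈ b := by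
    intro z hzx hzy
    obtain ⟨a, ha, hza⟩ := hc z
    have hz : z ∈ a \ {x, y} := by simp [hza, hzx, hzy]
    exact ⟨_, (hmem _).2 ⟨Finset.ne_empty_of_mem hz, a, ha, rfl⟩, hz⟩
  have h1 : IsPartitionOf (insert {x} (insert {y} P0)) := by
    refine ⟨?_, ?_, ?_⟩
    · intro b hb
      simp only [Finset.mem_insert] at hb
      rcases hb with rfl | rfl | hb
      · simp
      · simp
      · exact hne b hb
    · intro b hb b' hb' h
      simp only [Finset.mem_insert] at hb hb'
      rcases hb with rfl | rfl | hb <;> rcases hb' with rfl | rfl | hb' <;>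
        first
        | exact hd0 _ hb _ hb' h
        | exact absurd rfl h
        | simp [hxy, hxy.symm]; done
        | simp [hx0 _ hb', hy0 _ hb']; done
        | simp [hx0 _ hb, hy0 _ hb]; done
    · intro z
      by_cases hzx : z = x
      · exact ⟨{x}, by simp, by simp [hzx]⟩
      by_cases hzy : z = y
      · exact ⟨{y}, by simp, by simp [hzy]⟩
      obtain ⟨b, hb, hz⟩ := hc0 z hzx hzy
      exact ⟨b, by simp [hb], hz⟩
  have h2 : IsPartitionOf (insert {x, y} P0) := by
    refine ⟨?_, ?_, ?_⟩
    · intro b hb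
      simp only [Finset.mem_insert] at hb
      rcases hb with rfl | hb
      · simp
      · exact hne b hb
    · intro b hb b' hb' h
      simp only [Finset.mem_insert] at hb hb'
      rcases hb with rfl | hb <;> rcases hb' with rfl | hb' <;>
        first
        | exact hd0 _ hb _ hb' h
        | exact absurd rfl h
        | simp [hxy, hxy.symm]; done
        | simp [hx0 _ hb', hy0 _ hb']; done
        | simp [hx0 _ hb, hy0 _ hb]; done
    · intro z
      by_cases hzx : z = x
      · exact ⟨{x, y}, by simp, by simp [hzx]⟩
      by_cases hzy : z = y
      · exact ⟨{x, y}, by simp, by simp [hzy]⟩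
      obtain ⟨b, hb, hz⟩ := hc0 z hzx hzy
      exact ⟨b, by simp [hb], hz⟩
  have hc1 : (insert {x} (insert {y} P0)).card ≤ k := by
    have := Finset.card_insert_le {x} (insert {y} P0)
    have := Finset.card_insert_le {y} P0
    omega
  have hc2 : (insert {x, y} P0).card ≤ k := by
    have := Finset.card_insert_le {x, y} P0
    omega
  have h12 : insert {x} (insert {y} P0) ≠ insert {x, y} P0 := by
    intro h
    have hm : ({x} : Finset U) ∈ insert {x, y} P0 := h ▸ Finset.mem_insert_self _ _
    rcases Finset.mem_insert.1 hm with h' | h'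
    · have : y ∈ ({x} : Finset U) := by rw [h']; simp
      exact hxy (Finset.mem_singleton.1 this).symm
    · exact hx0 _ h' (by simp)
  obtain ⟨u, v, huv, hq, hxor⟩ := hdist _ _ h1 h2 hc1 hc2 h12
  have key : s(u, v) = s(x, y) := by
    rcases hxor with ⟨⟨b, hb, hu, hv⟩, hn⟩ | ⟨⟨b, hb, hu, hv⟩, hn⟩
    · simp only [Finset.mem_insert] at hb
      rcases hb with rfl | rfl | hb
      · exact absurd ((Finset.mem_singleton.1 hu).trans (Finset.mem_singleton.1 hv).symm) huv
      · exact absurd ((Finset.mem_singleton.1 hu).trans (Finset.mem_singleton.1 hv).symm) huv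
      · exact absurd ⟨b, by simp [hb], hu, hv⟩ hn
    · simp only [Finset.mem_insert] at hb
      rcases hb with rfl | hb
      · simp only [Finset.mem_insert, Finset.mem_singleton] at hu hv
        rcases hu with rfl | rfl <;> rcases hv with rfl | rfl
        · exact absurd rfl huv
        · rfl
        · exact Sym2.eq_swap
        · exact absurd rfl huv
      · exact absurd ⟨b, by simp [hb], hu, hv⟩ hn
  rw [key] at hq
  exact (Finset.mem_union.1 hq).resolve_left hnQ

end
end

section
/- Let n ≥ 2 be an integer, let s be an even integer with 2 ≤ s ≤ n, and let U be a set with |U| = n. Then there exists a family F of subsets of U with |F| ≤ 5n²/s², each member of size at most s, such that every pair of distinct elements of U is contained in some member of F. -/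
/-- **Non-adaptive strong subset query upper bound**: for `n ≥ 2` and even `2 ≤ s ≤ n`,
there is a family of at most `5n²/s²` subsets of a set `U` of `n` elements, each of size
at most `s`, covering every pair of distinct elements of `U`. -/
theorem nonadaptive_strong_query_upper_bound {U : Type*} [Fintype U] [DecidableEq U]
    (n s : ℕ) (hn : n = Fintype.card U) (hn2 : 2 ≤ n)
    (hs2 : 2 ≤ s) (hsn : s ≤ n) (hseven : Even s) :
    ∃ F : Finset (Finset U),
      ((F.card : ℝ) ≤ 5 * (n : ℝ) ^ 2 / (s : ℝ) ^ 2) ∧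
      (∀ T ∈ F, T.card ≤ s) ∧
      (∀ x y : U, x ≠ y → ∃ T ∈ F, x ∈ T ∧ y ∈ T) := by
  classical
  obtain ⟨t, ht⟩ := hseven
  have ht0 : 0 < t := by omega
  obtain ⟨e⟩ : Nonempty (U ≃ Fin n) := ⟨Fintype.equivFinOfCardEq hn.symm⟩
  -- number of blocks
  obtain ⟨k, hk⟩ : ∃ k, k = (n - 1) / t := ⟨_, rfl⟩
  have hk1 : 1 ≤ k := by
    rw [hk, Nat.le_div_iff_mul_le ht0]; omega
  have hkt : k * t ≤ n - 1 := by rw [hk]; exact Nat.div_mul_le_self _ _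
  have hb : ∀ u : U, (e u : ℕ) / t < k + 1 := by
    intro u
    have h1 := (e u).isLt
    have h2 : (e u : ℕ) / t ≤ (n - 1) / t := Nat.div_le_div_right (by omega)
    omega
  refine ⟨(Finset.powersetCard 2 (Finset.range (k + 1))).image
    (fun p => Finset.univ.filter (fun u : U => (e u : ℕ) / t ∈ p)), ?_, ?_, ?_⟩
  · have h1 : ((Finset.powersetCard 2 (Finset.range (k + 1))).image
      (fun p => Finset.univ.filter (fun u : U => (e u : ℕ) / t ∈ p))).card
        ≤ (k + 1).choose 2 := by
      refine Finset.card_image_le.trans ?_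
      simp
    have h2 : (((k + 1).choose 2 : ℕ) : ℝ) = (k + 1) * k / 2 := by
      rw [Nat.cast_choose_two]; push_cast; ring
    have h3 : (k : ℝ) * t ≤ n := by
      have : k * t ≤ n := by omega
      exact_mod_cast this
    have hsr : (s : ℝ) = 2 * t := by rw [ht]; push_cast; ring
    have htr : (0 : ℝ) < t := by exact_mod_cast ht0
    have hkr : (1 : ℝ) ≤ k := by exact_mod_cast hk1
    have h1' : ((((Finset.powersetCard 2 (Finset.range (k + 1))).image
      (fun p => Finset.univ.filter (fun u : U => (e u : ℕ) / t ∈ p))).card : ℕ) : ℝ)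
        ≤ (k + 1) * k / 2 := by
      rw [← h2]; exact_mod_cast h1
    refine h1'.trans ?_
    rw [le_div_iff₀ (by rw [hsr]; positivity), hsr]
    have h4 : ((k : ℝ) * t) ^ 2 ≤ (n : ℝ) ^ 2 := by gcongr
    have h5 : (k : ℝ) * t ^ 2 ≤ (k * t) ^ 2 := by
      nlinarith [mul_nonneg (mul_nonneg (by linarith : (0:ℝ) ≤ k) (sq_nonneg (t : ℝ)))
        (sub_nonneg.2 hkr)]
    nlinarith
  · intro T hT
    obtain ⟨p, hp, rfl⟩ := Finset.mem_image.1 hT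
    have hpc := (Finset.mem_powersetCard.1 hp).2
    have := Finset.card_le_mul_card_image_of_maps_to
      (s := Finset.univ.filter (fun u : U => (e u : ℕ) / t ∈ p)) (t := p)
      (f := fun u : U => (e u : ℕ) / t) (fun u hu => (Finset.mem_filter.1 hu).2) t ?_
    · rw [hpc] at this; omega
    · intro i _
      have h := Finset.card_le_card_of_injOn
        (s := (Finset.univ.filter (fun u : U => (e u : ℕ) / t ∈ p)).filter
          (fun u : U => (e u : ℕ) / t = i))
        (t := Finset.Ico (i * t) (i * t + t)) (fun u : U => (e u : ℕ)) ?_ ?_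
      · simpa using h
      · intro u hu
        have hu' : (e u : ℕ) / t = i := (Finset.mem_filter.1 hu).2
        rw [Nat.div_eq_iff ht0] at hu'
        simp only [Finset.coe_Ico, Set.mem_Ico]
        omega
      · intro u _ v _ h
        exact e.injective (Fin.ext h)
  · intro x y _
    have key : ∃ j < k + 1, j ≠ (e x : ℕ) / t ∧
        ((e y : ℕ) / t = (e x : ℕ) / t ∨ (e y : ℕ) / t = j) := by
      by_cases h : (e y : ℕ) / t = (e x : ℕ) / t
      · by_cases h0 : (e x : ℕ) / t = 0
        · exact ⟨1, by omega, by omega, Or.inl h⟩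
        · exact ⟨0, by omega, by omega, Or.inl h⟩
      · exact ⟨_, hb y, h, Or.inr rfl⟩
    obtain ⟨j, hj, hne, hy⟩ := key
    refine ⟨_, Finset.mem_image_of_mem _ (a := {(e x : ℕ) / t, j}) ?_, ?_, ?_⟩
    · rw [Finset.mem_powersetCard]
      refine ⟨?_, Finset.card_pair hne.symm⟩
      intro a ha
      have hx := hb x
      rcases Finset.mem_insert.1 ha with rfl | ha
      · exact Finset.mem_range.2 hx
      · rw [Finset.mem_singleton.1 ha]; exact Finset.mem_range.2 hj
    · simp
    · simpa using hy
end

section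
/- Let U be a set with |U| = n ≥ 2, let s ≥ 2 be an integer, and let F be a family of subsets of U, each of size at most s. Suppose that for any two distinct partitions P₁, P₂ of U each with at most 3 blocks, there exists S ∈ F such that the restriction of P₁ to S differs from the restriction of P₂ to S, where the restriction of a partition P to S is the collection of nonempty sets X ∩ S for X ∈ P. Then |F| ≥ (n(n−1))/(s(s−1)). -/
section

variable {U : Type*} [Fintype U] [DecidableEq U]

/-- The restriction of the partition `P` to a subset `T`: the collection of nonempty
sets `X ∩ T` for `X ∈ P`. -/
def restrictPartition (P : Finset (Finset U)) (T : Finset U) : Finset (Finset U) :=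
  (P.image (fun X => X ∩ T)).filter (fun b => b.Nonempty)

theorem exists_query_containing_pair (F : Finset (Finset U))
    (hdist : ∀ P₁ P₂ : Finset (Finset U), IsPartitionOf P₁ → IsPartitionOf P₂ →
      P₁.card ≤ 3 → P₂.card ≤ 3 → P₁ ≠ P₂ →
      ∃ T ∈ F, restrictPartition P₁ T ≠ restrictPartition P₂ T)
    (x y : U) (hxy : x ≠ y) : ∃ T ∈ F, x ∈ T ∧ y ∈ T := by
  classical
  let P₁ : Finset (Finset U) :=
    ({{x}, {y}, ({x, y} : Finset U)ᶜ} : Finset (Finset U)).filter (fun b => b.Nonempty)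
  let P₂ : Finset (Finset U) :=
    ({{x, y}, ({x, y} : Finset U)ᶜ} : Finset (Finset U)).filter (fun b => b.Nonempty)
  have h1 : IsPartitionOf P₁ := by
    refine ⟨fun b hb => (Finset.mem_filter.1 hb).2, ?_, ?_⟩
    · intro b hb b' hb' hne
      have hb := (Finset.mem_filter.1 hb).1
      have hb' := (Finset.mem_filter.1 hb').1
      simp only [Finset.mem_insert, Finset.mem_singleton] at hb hb'
      rw [Finset.disjoint_left]
      rcases hb with rfl | rfl | rfl <;> rcases hb' with rfl | rfl | rfl <;>
        first
        | exact absurd rfl hne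
        | (intro a; simp; try grind)
    · intro z
      by_cases hx : z = x
      · exact ⟨{x}, by simp [P₁], by simp [hx]⟩
      by_cases hy : z = y
      · exact ⟨{y}, by simp [P₁], by simp [hy]⟩
      have hz : z ∈ ({x, y} : Finset U)ᶜ := by simp [hx, hy]
      exact ⟨_, Finset.mem_filter.2 ⟨by simp, ⟨z, hz⟩⟩, hz⟩
  have h2 : IsPartitionOf P₂ := by
    refine ⟨fun b hb => (Finset.mem_filter.1 hb).2, ?_, ?_⟩
    · intro b hb b' hb' hne
      have hb := (Finset.mem_filter.1 hb).1
      have hb' := (Finset.mem_filter.1 hb').1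
      simp only [Finset.mem_insert, Finset.mem_singleton] at hb hb'
      rcases hb with rfl | rfl <;> rcases hb' with rfl | rfl
      · exact absurd rfl hne
      · exact disjoint_compl_right
      · exact disjoint_compl_left
      · exact absurd rfl hne
    · intro z
      by_cases hz : z ∈ ({x, y} : Finset U)
      · exact ⟨_, Finset.mem_filter.2 ⟨by simp, ⟨z, hz⟩⟩, hz⟩
      have hz : z ∈ ({x, y} : Finset U)ᶜ := Finset.mem_compl.2 hz
      exact ⟨_, Finset.mem_filter.2 ⟨by simp, ⟨z, hz⟩⟩, hz⟩
  have hne : P₁ ≠ P₂ := by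
    intro h
    have hx : ({x} : Finset U) ∈ P₂ := by rw [← h]; simp [P₁]
    have hx := (Finset.mem_filter.1 hx).1
    simp only [Finset.mem_insert, Finset.mem_singleton] at hx
    rcases hx with hx | hx
    · have : y ∈ ({x} : Finset U) := by rw [hx]; simp
      exact hxy (Finset.mem_singleton.1 this).symm
    · have : x ∈ ({x, y} : Finset U)ᶜ := by rw [← hx]; simp
      simp at this
  obtain ⟨T, hT, hd⟩ := hdist P₁ P₂ h1 h2
    ((Finset.card_filter_le _ _).trans Finset.card_le_three)
    ((Finset.card_filter_le _ _).trans (Finset.card_le_two.trans (by norm_num))) hne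
  refine ⟨T, hT, ?_⟩
  by_contra hc
  apply hd
  have hmem : ∀ (A : Finset (Finset U)) (b : Finset U),
      b ∈ restrictPartition (A.filter (fun b => b.Nonempty)) T ↔
        b.Nonempty ∧ ∃ X ∈ A, X ∩ T = b := by
    intro A b
    simp only [restrictPartition, Finset.mem_filter, Finset.mem_image]
    constructor
    · rintro ⟨⟨X, ⟨hX, -⟩, h⟩, hb⟩
      exact ⟨hb, X, hX, h⟩
    · rintro ⟨hb, X, hX, h⟩
      exact ⟨⟨X, ⟨hX, (h ▸ hb).mono Finset.inter_subset_left⟩, h⟩, hb⟩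
  ext b
  rw [hmem, hmem]
  refine and_congr_right fun hb => ?_
  simp only [Finset.mem_insert, Finset.mem_singleton, exists_eq_or_imp, exists_eq_left]
  by_cases hx : x ∈ T
  · have hy : y ∉ T := fun hy => hc ⟨hx, hy⟩
    have e1 : ({y} : Finset U) ∩ T = ∅ := Finset.singleton_inter_of_notMem hy
    have e2 : ({x, y} : Finset U) ∩ T = {x} ∩ T := by
      ext a; simp only [Finset.mem_inter, Finset.mem_insert, Finset.mem_singleton]; grind
    rw [e1, e2]
    have : ∅ ≠ b := hb.ne_empty.symm
    simp only [this, false_or]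
  · have e1 : ({x} : Finset U) ∩ T = ∅ := Finset.singleton_inter_of_notMem hx
    have e2 : ({x, y} : Finset U) ∩ T = {y} ∩ T := by
      ext a; simp only [Finset.mem_inter, Finset.mem_insert, Finset.mem_singleton]; grind
    rw [e1, e2]
    have : ∅ ≠ b := hb.ne_empty.symm
    simp only [this, false_or]

/-- **Non-adaptive strong subset query lower bound**: if a family `F` of subsets of `U`,
each of size at most `s`, distinguishes (by restriction) every two distinct partitions
of `U` into at most `3` blocks, then `|F| ≥ n(n-1)/(s(s-1))`. -/
theorem nonadaptive_strong_query_lower_bound (n s : ℕ)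
    (hn : n = Fintype.card U) (hn2 : 2 ≤ n) (hs : 2 ≤ s)
    (F : Finset (Finset U)) (hFs : ∀ T ∈ F, T.card ≤ s)
    (hdist : ∀ P₁ P₂ : Finset (Finset U), IsPartitionOf P₁ → IsPartitionOf P₂ →
      P₁.card ≤ 3 → P₂.card ≤ 3 → P₁ ≠ P₂ →
      ∃ T ∈ F, restrictPartition P₁ T ≠ restrictPartition P₂ T) :
    ((n : ℝ) * (n - 1)) / ((s : ℝ) * (s - 1)) ≤ F.card := by
  have hsub : (Finset.univ : Finset U).offDiag ⊆ F.biUnion (fun T => T.offDiag) := by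
    rintro ⟨x, y⟩ h
    obtain ⟨T, hT, hx, hy⟩ :=
      exists_query_containing_pair F hdist x y (Finset.mem_offDiag.1 h).2.2
    exact Finset.mem_biUnion.2 ⟨T, hT, Finset.mem_offDiag.2
      ⟨hx, hy, (Finset.mem_offDiag.1 h).2.2⟩⟩
  have hT : ∀ T ∈ F, T.offDiag.card ≤ s * (s - 1) := by
    intro T hT
    rw [Finset.offDiag_card, ← Nat.mul_sub_one]
    exact Nat.mul_le_mul (hFs T hT) (Nat.sub_le_sub_right (hFs T hT) 1)
  have hcard := (Finset.card_le_card hsub).trans (Finset.card_biUnion_le_card_mul _ _ _ hT)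
  rw [Finset.offDiag_card, Finset.card_univ, ← hn, ← Nat.mul_sub_one] at hcard
  have hR : ((n * (n - 1) : ℕ) : ℝ) ≤ ((F.card * (s * (s - 1)) : ℕ) : ℝ) := by
    exact_mod_cast hcard
  push_cast [Nat.cast_sub (by omega : 1 ≤ n), Nat.cast_sub (by omega : 1 ≤ s)] at hR
  have hs' : (2 : ℝ) ≤ s := by exact_mod_cast hs
  rw [div_le_iff₀ (by nlinarith)]
  exact hR

end
end

section
/- Let U be a set with |U| = n, let C be a partition of U, let K be the union of some subcollection of the blocks of C, and let c ≥ 1 be an integer such that every block of C not contained in K has size at most c. Let m ≥ 2 be an integer with c·m² ≤ n. If I is a uniformly random m-element subset of U, then the probability that there exist two distinct elements of I ∖ K lying in the same block of C is at most 1/2. -/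
section

variable {U : Type*} [Fintype U] [DecidableEq U]

theorem aux_contain (m : ℕ) (hm : 2 ≤ m) (x y : U) (hxy : x ≠ y) :
    ((Finset.powersetCard m (Finset.univ : Finset U)).filter
      (fun I => x ∈ I ∧ y ∈ I)).card ≤ (Fintype.card U - 2).choose (m - 2) := by
  have h1 : ((Finset.univ : Finset U) \ {x, y}).card = Fintype.card U - 2 := by
    rw [Finset.card_sdiff_of_subset (Finset.subset_univ _), Finset.card_pair hxy,
      Finset.card_univ]
  rw [← h1, ← Finset.card_powersetCard]
  apply Finset.card_le_card_of_injOn (fun I => I \ {x, y})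
  · intro I hI
    simp only [Finset.coe_filter, Finset.mem_powersetCard, Set.mem_setOf_eq] at hI
    obtain ⟨⟨_, hc⟩, hx, hy⟩ := hI
    have hs : ({x, y} : Finset U) ⊆ I := by
      intro z hz
      simp only [Finset.mem_insert, Finset.mem_singleton] at hz
      rcases hz with rfl | rfl <;> assumption
    simp only [Finset.mem_coe, Finset.mem_powersetCard]
    refine ⟨Finset.sdiff_subset_sdiff (Finset.subset_univ _) (Finset.Subset.refl _), ?_⟩
    rw [Finset.card_sdiff_of_subset hs, Finset.card_pair hxy, hc]
  · intro I hI J hJ h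
    simp only [Finset.coe_filter, Set.mem_setOf_eq] at hI hJ
    ext z
    have hz := Finset.ext_iff.mp h z
    simp only [Finset.mem_sdiff, Finset.mem_insert, Finset.mem_singleton] at hz
    by_cases h1 : z = x
    · subst h1; tauto
    by_cases h2 : z = y
    · subst h2; tauto
    tauto

theorem aux_arith (n c m : ℕ) (hc : 1 ≤ c) (hm : 2 ≤ m) (hcm : c * m ^ 2 ≤ n) :
    n * (c - 1) * (n - 2).choose (m - 2) ≤ n.choose m := by
  obtain ⟨k, rfl⟩ := Nat.exists_eq_add_of_le' hm
  obtain ⟨d, rfl⟩ := Nat.exists_eq_add_of_le' hc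
  have hn : 2 ≤ n := by nlinarith
  obtain ⟨p, rfl⟩ := Nat.exists_eq_add_of_le' hn
  simp only [Nat.add_sub_cancel]
  have e1 := Nat.add_one_mul_choose_eq p k
  have e2 := Nat.add_one_mul_choose_eq (p + 1) (k + 1)
  have e3 : (p + 2) * (p + 1) * p.choose k = (p + 2).choose (k + 2) * ((k + 2) * (k + 1)) := by
    calc _ = (p + 1 + 1) * ((p + 1) * p.choose k) := by ring
      _ = ((p + 1 + 1) * (p + 1).choose (k + 1)) * (k + 1) := by rw [e1]; ring
      _ = _ := by rw [e2]; ring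
  have h4 : d * ((k + 2) * (k + 1)) ≤ p + 1 := by nlinarith
  have h5 : 0 < (k + 2) * (k + 1) := by positivity
  refine Nat.le_of_mul_le_mul_right ?_ h5
  rw [← e3]
  calc _ = (d * ((k + 2) * (k + 1))) * ((p + 2) * p.choose k) := by ring
    _ ≤ (p + 1) * ((p + 2) * p.choose k) := Nat.mul_le_mul_right _ h4
    _ = _ := by ring

/-- If every unknown block (block not contained in `K`) of the partition `C` has size at
most `c`, and `c·m² ≤ n`, then a uniformly random `m`-element subset `I` of `U` contains
two distinct elements of `I ∖ K` in the same block of `C` with probability at most `1/2`;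
stated by counting: the number of bad `m`-element subsets is at most `(1/2)·C(n,m)`. -/
theorem random_subset_independent_whp (n : ℕ) (hn : n = Fintype.card U)
    (C : Finset (Finset U)) (hC : IsPartitionOf C)
    (𝒦 : Finset (Finset U)) (h𝒦 : 𝒦 ⊆ C) (K : Finset U) (hK : K = 𝒦.biUnion id)
    (c : ℕ) (hc : 1 ≤ c) (hsmall : ∀ B ∈ C, ¬ B ⊆ K → B.card ≤ c)
    (m : ℕ) (hm : 2 ≤ m) (hcm : c * m ^ 2 ≤ n) :
    (Nat.card {I : Finset U // I.card = m ∧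
        ∃ x ∈ I, ∃ y ∈ I, x ≠ y ∧ x ∉ K ∧ y ∉ K ∧ SameSet C x y} : ℝ) ≤
      (1 / 2 : ℝ) * (n.choose m) := by
  classical
  have e0 := Fintype.card_subtype (fun I : Finset U => I.card = m ∧
        ∃ x ∈ I, ∃ y ∈ I, x ≠ y ∧ x ∉ K ∧ y ∉ K ∧ SameSet C x y)
  rw [Nat.card_eq_fintype_card, e0]
  set S := Finset.univ.filter (fun I : Finset U => I.card = m ∧
        ∃ x ∈ I, ∃ y ∈ I, x ≠ y ∧ x ∉ K ∧ y ∉ K ∧ SameSet C x y) with hS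
  let T : Finset (Σ _ : U, U) := Finset.univ.sigma (fun x => Finset.univ.filter
    (fun y => x ≠ y ∧ x ∉ K ∧ y ∉ K ∧ SameSet C x y))
  have hT : T.card ≤ n * (c - 1) := by
    rw [Finset.card_sigma, hn, ← Finset.card_univ, ← smul_eq_mul]
    apply Finset.sum_le_card_nsmul
    intro x _
    by_cases hx : x ∈ K
    · simp [hx]
    obtain ⟨B, hB, hxB⟩ := hC.2.2 x
    have hBc := hsmall B hB (fun h => hx (h hxB))
    calc _ ≤ (B.erase x).card := by
          apply Finset.card_le_card
          intro y hy
          simp only [Finset.mem_filter, Finset.mem_univ, true_and] at hy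
          obtain ⟨hne, _, _, B', hB', hxB', hyB'⟩ := hy
          have : B' = B := by
            by_contra hne'
            exact Finset.disjoint_left.mp (hC.2.1 B' hB' B hB hne') hxB' hxB
          subst this
          exact Finset.mem_erase.mpr ⟨hne.symm, hyB'⟩
      _ ≤ c - 1 := by rw [Finset.card_erase_of_mem hxB]; omega
  have key : S.card * 2 ≤ T.card * (n - 2).choose (m - 2) := by
    apply Finset.card_mul_le_card_mul (fun (I : Finset U) (p : Σ _ : U, U) => p.1 ∈ I ∧ p.2 ∈ I)
    · intro I hI
      simp only [hS, Finset.mem_filter, Finset.mem_univ, true_and] at hI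
      obtain ⟨_, x, hx, y, hy, hxy, hxK, hyK, B, hB, hxB, hyB⟩ := hI
      have hne : (⟨x, y⟩ : Σ _ : U, U) ≠ ⟨y, x⟩ := by
        intro h; exact hxy (congrArg Sigma.fst h)
      rw [← Finset.card_pair hne]
      apply Finset.card_le_card
      intro p hp
      simp only [Finset.mem_insert, Finset.mem_singleton] at hp
      rcases hp with rfl | rfl
      · simp only [Finset.mem_bipartiteAbove, T, Finset.mem_sigma, Finset.mem_filter,
          Finset.mem_univ, true_and]
        exact ⟨⟨hxy, hxK, hyK, B, hB, hxB, hyB⟩, hx, hy⟩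
      · simp only [Finset.mem_bipartiteAbove, T, Finset.mem_sigma, Finset.mem_filter,
          Finset.mem_univ, true_and]
        exact ⟨⟨hxy.symm, hyK, hxK, B, hB, hyB, hxB⟩, hy, hx⟩
    · rintro ⟨x, y⟩ hp
      simp only [T, Finset.mem_sigma, Finset.mem_filter, Finset.mem_univ, true_and] at hp
      rw [hn]
      refine le_trans (Finset.card_le_card ?_) (aux_contain m hm x y hp.1)
      intro I hI
      simp only [Finset.mem_bipartiteBelow, hS, Finset.mem_filter, Finset.mem_univ,
        true_and] at hI
      simp only [Finset.mem_filter, Finset.mem_powersetCard]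
      exact ⟨⟨Finset.subset_univ _, hI.1.1⟩, hI.2⟩
  have fin : S.card * 2 ≤ n.choose m :=
    key.trans ((Nat.mul_le_mul_right _ hT).trans (aux_arith n c m hc hm hcm))
  have : (S.card : ℝ) * 2 ≤ (n.choose m : ℝ) := by exact_mod_cast fin
  linarith

end
end

section
/- Let U be a finite set, let C be a partition of U, let K be the union of some subcollection of the blocks of C, and let W be a family of subsets of U with the following property: for every two elements x, y ∈ U ∖ K lying in different blocks of C, there exists I ∈ W such that x, y ∈ I and the elements of I ∖ K lie in pairwise different blocks of C. Let E be the set of unordered pairs {u, v} of distinct elements of U ∖ K for which there exists I ∈ W with u, v ∈ I and the elements of I ∖ K lying in pairwise different blocks of C. Then the connected components of the simple graph on vertex set U ∖ K whose edges are exactly the unordered pairs of distinct elements of U ∖ K not belonging to E are precisely the blocks of C not contained in K. -/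
section

variable {U : Type*} [Fintype U] [DecidableEq U]

/-- **Correctness of `LearnSparse`.** Suppose every separated pair of `U ∖ K` (pair of
elements in different unknown blocks) is witnessed by some `I ∈ W` containing both whose
elements outside `K` lie in pairwise different blocks of `C`.  Form the graph on `U ∖ K`
whose edges are the pairs *not* so witnessed.  Then being connected in this graph is the
same as lying in the same block of `C`; hence its connected components are precisely the
blocks of `C` not contained in `K` (each of which avoids `K` entirely). -/
theorem learn_sparse_components (C : Finset (Finset U)) (hC : IsPartitionOf C)
    (𝒦 : Finset (Finset U)) (h𝒦 : 𝒦 ⊆ C) (K : Finset U) (hK : K = 𝒦.biUnion id)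
    (W : Finset (Finset U))
    (hW : ∀ x y : U, x ∉ K → y ∉ K → ¬ SameSet C x y →
      ∃ I ∈ W, x ∈ I ∧ y ∈ I ∧
        (∀ a ∈ I, ∀ b ∈ I, a ∉ K → b ∉ K → a ≠ b → ¬ SameSet C a b)) :
    (∀ a b : {u : U // u ∉ K},
      (SimpleGraph.fromRel (fun p q : {u : U // u ∉ K} =>
          ¬ ∃ I ∈ W, (p : U) ∈ I ∧ (q : U) ∈ I ∧
            (∀ a ∈ I, ∀ b ∈ I, a ∉ K → b ∉ K → a ≠ b → ¬ SameSet C a b))).Reachable a b ↔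
        SameSet C (a : U) (b : U)) ∧
    (∀ B ∈ C, ¬ B ⊆ K → ∀ x ∈ B, x ∉ K) := by
  obtain ⟨_, hdisj, hcov⟩ := hC
  have huniq : ∀ b ∈ C, ∀ b' ∈ C, ∀ x, x ∈ b → x ∈ b' → b = b' := by
    intro b hb b' hb' x hx hx'
    by_contra hne
    exact Finset.disjoint_left.mp (hdisj b hb b' hb' hne) hx hx'
  have hsymm : ∀ x y, SameSet C x y → SameSet C y x := by
    rintro x y ⟨b, hb, hx, hy⟩
    exact ⟨b, hb, hy, hx⟩
  have htrans : ∀ x y z, SameSet C x y → SameSet C y z → SameSet C x z := by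
    rintro x y z ⟨b, hb, hx, hy⟩ ⟨b', hb', hy', hz⟩
    have h := huniq b hb b' hb' y hy hy'
    subst h
    exact ⟨b, hb, hx, hz⟩
  refine ⟨fun a b => ⟨?_, ?_⟩, ?_⟩
  · rintro ⟨w⟩
    induction w with
    | nil =>
      obtain ⟨c, hc, hx⟩ := hcov _
      exact ⟨c, hc, hx, hx⟩
    | @cons u v _ hadj _ ih =>
      refine htrans _ _ _ ?_ ih
      rw [SimpleGraph.fromRel_adj] at hadj
      rcases hadj.2 with h | h
      · by_contra hns
        exact h (hW _ _ u.2 v.2 hns)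
      · by_contra hns
        exact h (hW _ _ v.2 u.2 (fun h' => hns (hsymm _ _ h')))
  · intro hs
    by_cases hab : a = b
    · subst hab
      exact SimpleGraph.Reachable.refl _
    · apply SimpleGraph.Adj.reachable
      rw [SimpleGraph.fromRel_adj]
      refine ⟨hab, Or.inl ?_⟩
      rintro ⟨I, _, ha, hb, h⟩
      exact h _ ha _ hb a.2 b.2 (fun h' => hab (Subtype.ext h')) hs
  · intro B hB hBK x hx hxK
    rw [hK, Finset.mem_biUnion] at hxK
    obtain ⟨B', hB', hx'⟩ := hxK
    have h := huniq B hB B' (h𝒦 hB') x hx hx'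
    subst h
    apply hBK
    rw [hK]
    exact Finset.subset_biUnion_of_mem id hB'

end
end

section
/- Let U be a set with |U| = n, let δ ∈ (0, 1) satisfy ln(n/δ) ≥ 1, let B ≥ 1 be a real number, and let C ⊆ U with |C| ≤ 2n/B. Let X₁, …, X_m be i.i.d. uniform samples from U with m ≤ 4·B·ln(n/δ). Then the probability that |{i : Xᵢ ∈ C}| ≥ 72·ln(n/δ) is at most (δ/n)^{24}. -/
/-- If `|C| ≤ 2n/B` and `X₁, …, X_m` are i.i.d. uniform samples from `U` (modeled by a
uniformly random function `Fin m → U`) with `m ≤ 4·B·ln(n/δ)`, then the probability that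
at least `72·ln(n/δ)` of the samples land in `C` is at most `(δ/n)²⁴`; stated by
counting: the number of such bad sample sequences is at most `(δ/n)²⁴ · n^m`. -/
theorem concentration_samples_in_small_set {U : Type*} [Fintype U] [DecidableEq U]
    (n : ℕ) (hn : n = Fintype.card U)
    (δ : ℝ) (hδ0 : 0 < δ) (hδ1 : δ < 1) (hlog : 1 ≤ Real.log ((n : ℝ) / δ))
    (B : ℝ) (hB : 1 ≤ B)
    (C : Finset U) (hC : (C.card : ℝ) ≤ 2 * (n : ℝ) / B)
    (m : ℕ) (hm : (m : ℝ) ≤ 4 * B * Real.log ((n : ℝ) / δ)) :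
    (Nat.card {f : Fin m → U //
        72 * Real.log ((n : ℝ) / δ) ≤
          ((Finset.univ.filter (fun i : Fin m => f i ∈ C)).card : ℝ)} : ℝ) ≤
      (δ / (n : ℝ)) ^ (24 : ℕ) * (n : ℝ) ^ m := by
  have hn0 : n ≠ 0 := by
    rintro rfl
    norm_num at hlog
  have hnpos : (0 : ℝ) < n := by exact_mod_cast Nat.pos_of_ne_zero hn0
  set L := Real.log ((n : ℝ) / δ) with hL
  have hexpL : δ / (n : ℝ) = Real.exp (-L) := by
    rw [Real.exp_neg, hL, Real.exp_log (by positivity), inv_div]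
  set g : U → ℝ := fun u => if u ∈ C then Real.exp 1 else 1 with hg
  have he3 : Real.exp 1 ≤ 3 := by
    have := Real.exp_one_lt_d9
    linarith
  have hsum : ∑ u, g u ≤ n * Real.exp (2 * (C.card / n)) := by
    have h1 : ∑ u, g u ≤ ∑ u : U, (1 + if u ∈ C then (2 : ℝ) else 0) := by
      apply Finset.sum_le_sum
      intro u _
      simp only [hg]
      split_ifs <;> linarith
    have h2 : ∑ u : U, (1 + if u ∈ C then (2 : ℝ) else 0) = n + 2 * C.card := by
      rw [Finset.sum_add_distrib]
      simp [hn, mul_comm]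
    have h3 := Real.add_one_le_exp (2 * ((C.card : ℝ) / n))
    have h4 : (n : ℝ) + 2 * C.card = n * (2 * ((C.card : ℝ) / n) + 1) := by
      field_simp
      ring
    rw [h2, h4] at h1
    exact h1.trans (mul_le_mul_of_nonneg_left h3 hnpos.le)
  have hg0 : 0 ≤ ∑ u, g u := Finset.sum_nonneg fun u _ => by
    simp only [hg]
    split_ifs <;> positivity
  have hprod : ∀ f : Fin m → U, ∏ i, g (f i) =
      Real.exp ((Finset.univ.filter (fun i : Fin m => f i ∈ C)).card : ℝ) := by
    intro f
    simp only [hg]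
    rw [Finset.prod_ite]
    simp [← Real.exp_nat_mul]
  have htot : ∑ f : Fin m → U, ∏ i, g (f i) = (∑ u, g u) ^ m := by
    rw [← Fintype.sum_pow]
  have hcard : (Nat.card {f : Fin m → U //
        72 * L ≤ ((Finset.univ.filter (fun i : Fin m => f i ∈ C)).card : ℝ)} : ℝ) ≤
      Real.exp (-(72 * L)) * (∑ u, g u) ^ m := by
    classical
    rw [Nat.card_eq_fintype_card, Fintype.card_subtype, Finset.card_filter, ← htot,
      Finset.mul_sum]
    push_cast
    apply Finset.sum_le_sum
    intro f _
    rw [hprod, ← Real.exp_add]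
    split_ifs with h
    · apply Real.one_le_exp
      linarith
    · positivity
  have hmp : (m : ℝ) * (C.card / n) ≤ 8 * L := by
    have h1 : (C.card : ℝ) / n ≤ 2 / B := by
      rw [div_le_iff₀ hnpos]
      calc (C.card : ℝ) ≤ 2 * n / B := hC
        _ = 2 / B * n := by ring
    calc (m : ℝ) * (C.card / n) ≤ (4 * B * L) * (2 / B) := by
          apply mul_le_mul hm h1 (by positivity) (by positivity)
      _ = 8 * L := by
          field_simp
          ring
  calc _ ≤ _ := hcard
    _ ≤ Real.exp (-(72 * L)) * (n * Real.exp (2 * (C.card / n))) ^ m := by gcongr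
    _ = Real.exp (-(72 * L) + m * (2 * (C.card / n))) * (n : ℝ) ^ m := by
        rw [mul_pow, ← Real.exp_nat_mul, Real.exp_add]
        ring
    _ ≤ _ := by
        rw [hexpL, ← Real.exp_nat_mul]
        gcongr
        push_cast
        linarith
end
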